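/- For every nonnegative integer n, ped(225n + 43) ≡ 0 (mod 24). -/

import Mathlib

/-- `ped n` is the number of partitions of `n` in which the even parts are
distinct (and the odd parts are unrestricted). -/
def ped (n : ℕ) : ℕ :=
  Fintype.card {p : n.Partition // ∀ x ∈ p.parts, Even x → p.parts.count x ≤ 1}

/-!
Let `G = ∑ (-1) ^ n * ped n * X ^ n`, let `φ = ∑ X ^ (k ^ 2)` and `Ψ = ∑ X ^ (k * (k + 1) / 2)`,
both over all integers `k`. Gauss's product formula for `Ψ` gives `G * Ψ = Ψ(X ^ 2)`, which with
`Ψ ^ 2 = 2 * φ * Ψ(X ^ 2)` becomes `2 * G * φ = Ψ`.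

Modulo 8: as `φ = 1 + 2 * Y`, the series `φ * (2 * φ(X ^ 2) - φ)` is `1` modulo 8, so
`2 * G ≡ Ψ * (2 * φ(X ^ 2) - φ)` modulo 16. Hence `8 ∣ ped N` unless `8 * N + 1` is represented by
`x ^ 2 + 8 * y ^ 2` or `x ^ 2 + 16 * y ^ 2`. For `N = 225 * n + 43` the primes 5 and 3 divide
`8 * N + 1` exactly once, while `-8` and `-16` are nonresidues modulo 5 and 3 respectively.

Modulo 3: `φ ^ 3 ≡ φ(X ^ 3)` turns the identity into `2 * G * φ(X ^ 3) ≡ Ψ * φ ^ 2`. Dissecting the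
right-hand side modulo 3 shows that the terms of `G` with exponent `3 * m + 1` form the series
`φ(X) * Ψ(X ^ 3)` in `X ^ m`. As no square is 2 modulo 3, this has no exponent `m ≡ 2`.
-/

open Finset Function PowerSeries

section Theta

variable {α β ι : Type*}

lemma northcott_of_le_add {e f : α → ℕ} [Northcott e] (c : ℕ) (h : ∀ a, e a ≤ f a + c) :
    Northcott f where
  finite_le b := (Northcott.finite_le (h := e) (b + c)).subset fun a ha ↦
    (h a).trans (Nat.add_le_add_right ha c)

lemma northcott_of_natAbs_le_add {f : ℤ → ℕ} (c : ℕ) (h : ∀ k, k.natAbs ≤ f k + c) :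
    Northcott f :=
  have : Northcott Int.natAbs :=
    ⟨fun b ↦ (Set.finite_Icc (-b : ℤ) b).subset fun k (hk : k.natAbs ≤ b) ↦ by
      rw [Set.mem_Icc]; lia⟩
  northcott_of_le_add c h

lemma northcott_of_le_self {f : ℕ → ℕ} (h : ∀ k, k ≤ f k) : Northcott f :=
  have : Northcott (id : ℕ → ℕ) := ⟨Set.finite_Iic⟩
  northcott_of_le_add (e := id) 0 h

/-- The weight `e a + f b` of a pair `(a, b)`. -/
def prodWeight (e : α → ℕ) (f : β → ℕ) (p : α × β) : ℕ := e p.1 + f p.2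

instance (e : α → ℕ) [Northcott e] (c : ℕ) [NeZero c] : Northcott (c • e) :=
  northcott_of_le_add 0 fun a ↦ Nat.le_mul_of_pos_left (e a) (NeZero.pos c)

instance (e : α → ℕ) (f : β → ℕ) [Northcott e] [Northcott f] : Northcott (prodWeight e f) where
  finite_le b := ((Northcott.finite_le (h := e) b).prod (Northcott.finite_le (h := f) b)).subset
    fun _ hp ↦ ⟨(Nat.le_add_right _ _).trans hp, (Nat.le_add_left _ _).trans hp⟩

lemma northcott_comp_of_injective (e : α → ℕ) [Northcott e] {g : β → α} (hg : Injective g) :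
    Northcott (e ∘ g) where
  finite_le b := (Northcott.finite_le (h := e) b).preimage hg.injOn

lemma finite_fiber (e : α → ℕ) [Northcott e] (n : ℕ) : {a | e a = n}.Finite :=
  (Northcott.finite_le (h := e) n).subset fun _ ↦ Eq.le

instance (e : α → ℕ) [Northcott e] (n : ℕ) : Finite {a // e a = n} := finite_fiber e n

/-- The generating series `∑ a, X ^ e a` of a weight function `e`. An infinite fibre of `e` would
contribute the junk value `0`; `Northcott e` excludes this. -/
noncomputable def theta (R : Type*) [CommRing R] (e : α → ℕ) : R⟦X⟧ :=
  mk fun n ↦ (Nat.card {a // e a = n} : R)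

variable {R S : Type*} [CommRing R] [CommRing S]

@[simp] lemma coeff_theta (e : α → ℕ) (n : ℕ) :
    coeff n (theta R e) = Nat.card {a // e a = n} :=
  coeff_mk _ _

lemma coeff_theta_eq_zero {e : α → ℕ} {n : ℕ} (h : ∀ a, e a ≠ n) : coeff n (theta R e) = 0 := by
  have : IsEmpty {a // e a = n} := ⟨fun a ↦ h a a.2⟩
  simp

lemma theta_ne_zero [CharZero R] [Nonempty α] (e : α → ℕ) [Northcott e] : theta R e ≠ 0 := by
  obtain ⟨a⟩ := ‹Nonempty α›
  intro h
  have : Nonempty {b // e b = e a} := ⟨⟨a, rfl⟩⟩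
  have hcoeff := coeff_theta (R := R) e (e a)
  rw [h, map_zero] at hcoeff
  exact Nat.card_pos.ne' (Nat.cast_eq_zero.1 hcoeff.symm)

@[simp] lemma map_theta (g : R →+* S) (e : α → ℕ) : (theta R e).map g = theta S e := by
  ext n
  simp

lemma theta_comp_equiv (e : α → ℕ) (E : β ≃ α) : theta R (e ∘ E) = theta R e := by
  ext n
  simp only [coeff_theta, comp_apply]
  rw [Nat.card_congr (E.subtypeEquiv fun _ ↦ Iff.rfl : {b // e (E b) = n} ≃ {a // e a = n})]

lemma theta_sumElim (e : α → ℕ) (f : β → ℕ) [Northcott e] [Northcott f] :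
    theta R (Sum.elim e f) = theta R e + theta R f := by
  ext n
  have E : {p // Sum.elim e f p = n} ≃ {a // e a = n} ⊕ {b // f b = n} := Equiv.subtypeSum
  simp [Nat.card_congr E, Nat.card_sum]

lemma theta_of_unique [Unique α] (e : α → ℕ) : theta R e = X ^ e default := by
  ext n
  rw [coeff_theta, coeff_X_pow]
  split_ifs with h
  · have : Unique {a // e a = n} := ⟨⟨⟨default, h.symm⟩⟩, fun a ↦ Subtype.ext (Unique.eq_default _)⟩
    simp
  · have : IsEmpty {a // e a = n} := ⟨fun a ↦ h (by rw [← a.2, Unique.eq_default a.1])⟩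
    simp

lemma theta_int_eq_add (e : ℤ → ℕ) [Northcott e] :
    theta R e = theta R (fun k : ℕ ↦ e k) + theta R fun k : ℕ ↦ e (-1 - k) := by
  have : Northcott fun k : ℕ ↦ e k := northcott_comp_of_injective e Nat.cast_injective
  have : Northcott fun k : ℕ ↦ e (-1 - k) :=
    northcott_comp_of_injective e (g := fun k : ℕ ↦ (-1 - k : ℤ)) fun _ _ h ↦ by simpa using h
  have hE : e ∘ Equiv.intEquivNatSumNat.symm =
      Sum.elim (fun k : ℕ ↦ e k) fun k : ℕ ↦ e (-1 - k) := by
    ext (k | k)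
    · rfl
    · exact congrArg e (show Int.negSucc k = -1 - k by lia)
  rw [← theta_comp_equiv e Equiv.intEquivNatSumNat.symm, hE, theta_sumElim]

lemma theta_nat_eq_X_pow_add (e : ℕ → ℕ) [Northcott e] :
    theta R e = X ^ e 0 + theta R fun k ↦ e (k + 1) := by
  have : Northcott fun k ↦ e (k + 1) := northcott_comp_of_injective e (add_left_injective 1)
  have : Northcott fun _ : Unit ↦ e 0 := ⟨fun _ ↦ Set.toFinite _⟩
  have hE : e ∘ Equiv.natSumPUnitEquivNat =
      Sum.elim (fun k ↦ e (k + 1)) fun _ : Unit ↦ e 0 := by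
    ext (k | k) <;> rfl
  rw [← theta_comp_equiv e Equiv.natSumPUnitEquivNat, hE, theta_sumElim, add_comm,
    theta_of_unique fun _ : Unit ↦ e 0]

lemma theta_eq_sum_of_prod_equiv [Fintype ι] (e : α → ℕ) [Northcott e] (E : β × ι ≃ α) :
    theta R e = ∑ i, theta R fun b ↦ e (E (b, i)) := by
  ext n
  have (i : ι) : Northcott fun b ↦ e (E (b, i)) :=
    northcott_comp_of_injective e (E.injective.comp fun _ _ h ↦ congrArg Prod.fst h)
  have F : {a // e a = n} ≃ Σ i, {b // e (E (b, i)) = n} :=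
    ((E.symm.trans (Equiv.prodComm β ι)).subtypeEquiv fun a ↦ by simp).trans
      (Equiv.subtypeProdEquivSigmaSubtype fun i b ↦ e (E (b, i)) = n)
  simp [Nat.card_congr F, Nat.card_sigma]

lemma theta_int_eq_sum_mod (n : ℕ) [NeZero n] (e : ℤ → ℕ) [Northcott e] :
    theta R e = ∑ i : Fin n, theta R fun k ↦ e (k * n + i) :=
  theta_eq_sum_of_prod_equiv e (Int.divModEquiv n).symm

-- The pairs `(x, y)` are sorted by the class of `x + y` modulo `n`.
lemma theta_int_prod_eq_sum_mod (n : ℕ) [NeZero n] (e : ℤ × ℤ → ℕ) [Northcott e] :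
    theta R e = ∑ i : Fin n, theta R fun p : ℤ × ℤ ↦ e ((n - 1) * p.1 + p.2 + i, p.1 - p.2) := by
  let E := (Int.divModEquiv n).symm
  have hbij : Bijective fun q : (ℤ × ℤ) × Fin n ↦
      ((n - 1) * q.1.1 + q.1.2 + q.2, q.1.1 - q.1.2) := by
    refine ⟨fun ⟨⟨a, b⟩, i⟩ ⟨⟨a', b'⟩, i'⟩ h ↦ ?_, fun ⟨x, y⟩ ↦ ?_⟩
    · obtain ⟨h1, h2⟩ := Prod.mk.inj h
      have hE : E (a, i) = E (a', i') :=
        show a * n + i = a' * n + i' by linear_combination h1 + h2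
      obtain ⟨rfl, rfl⟩ := Prod.mk.inj (E.injective hE)
      simpa using h2
    · obtain ⟨⟨q, i⟩, hq⟩ := E.surjective (x + y)
      have hq : q * n + i = x + y := hq
      exact ⟨((q, q - y), i), Prod.ext (by linear_combination hq) (by ring)⟩
  exact theta_eq_sum_of_prod_equiv e (.ofBijective _ hbij)

lemma theta_mul (e : α → ℕ) (f : β → ℕ) [Northcott e] [Northcott f] :
    theta R e * theta R f = theta R (prodWeight e f) := by
  ext n
  let E : {p // prodWeight e f p = n} ≃
      Σ x : antidiagonal n, {a // e a = x.1.1} × {b // f b = x.1.2} :=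
    { toFun p := ⟨⟨(e p.1.1, f p.1.2), mem_antidiagonal.2 p.2⟩, ⟨p.1.1, rfl⟩, ⟨p.1.2, rfl⟩⟩
      invFun y := ⟨(y.2.1.1, y.2.2.1), by
        rw [prodWeight, y.2.1.2, y.2.2.2, mem_antidiagonal.1 y.1.2]⟩
      right_inv := by
        rintro ⟨⟨⟨i, j⟩, h⟩, ⟨a, ha⟩, ⟨b, hb⟩⟩
        obtain rfl : e a = i := ha
        obtain rfl : f b = j := hb
        rfl }
  rw [coeff_mul, coeff_theta, Nat.card_congr E, Nat.card_sigma, ← sum_attach]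
  simp [Nat.card_prod, univ_eq_attach]

lemma expand_theta (c : ℕ) [NeZero c] (e : α → ℕ) :
    (theta R e).expand c (NeZero.ne c) = theta R (c • e) := by
  ext n
  rw [coeff_expand]
  split_ifs with h
  · obtain ⟨m, rfl⟩ := h
    simp [NeZero.ne c]
  · exact (coeff_theta_eq_zero fun a ha ↦ h ⟨_, ha.symm⟩).symm

lemma X_mul_theta (e : α → ℕ) : X * theta R e = theta R (e + 1) := by
  ext n
  cases n with
  | zero => simp
  | succ n => simp [coeff_succ_X_mul]

open WithPiTopology in
lemma hasSum_theta [TopologicalSpace R] (e : α → ℕ) [Northcott e] :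
    HasSum (fun a ↦ X ^ e a) (theta R e) := by
  rw [hasSum_iff_hasSum_coeff]
  intro n
  have hcard : coeff n (theta R e) = ∑ a ∈ (finite_fiber e n).toFinset,
      coeff n (X ^ e a : R⟦X⟧) := by
    have hone : ∀ a ∈ (finite_fiber e n).toFinset, coeff n (X ^ e a : R⟦X⟧) = 1 := fun a ha ↦ by
      simp_all [coeff_X_pow]
    rw [sum_congr rfl hone, sum_const, nsmul_one, coeff_theta]
    exact congrArg _ (Nat.card_eq_card_finite_toFinset (finite_fiber e n))
  rw [hcard]
  refine hasSum_sum_of_ne_finset_zero fun a ha ↦ ?_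
  rw [coeff_X_pow, if_neg fun h ↦ ha (by simpa using h.symm)]

end Theta

section Quadratic

/-- The triangular number `k * (k + 1) / 2`, for an integer index. -/
def triangular (k : ℤ) : ℕ := (k * (k + 1) / 2).toNat

/-- The square of an integer, as a weight. -/
def square (k : ℤ) : ℕ := k.natAbs ^ 2

/-- The generalized octagonal number `k * (3 * k - 2)`, for an integer index. -/
def octagonal (k : ℤ) : ℕ := (k * (3 * k - 2)).toNat

lemma two_mul_natCast_triangular (k : ℤ) : 2 * (triangular k : ℤ) = k * (k + 1) := by
  rw [triangular, Int.toNat_of_nonneg (Int.ediv_nonneg (by nlinarith [sq_nonneg k]) zero_le_two),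
    Int.two_mul_ediv_two_of_even (Int.even_mul_succ_self k)]

lemma natCast_square (k : ℤ) : (square k : ℤ) = k ^ 2 := by simp [square]

lemma natCast_octagonal (k : ℤ) : (octagonal k : ℤ) = k * (3 * k - 2) :=
  Int.toNat_of_nonneg (by rcases le_or_gt k 0 with h | h <;> nlinarith)

lemma natAbs_le_triangular_add_one (k : ℤ) : k.natAbs ≤ triangular k + 1 := by
  zify
  rcases abs_cases k with h | h <;> nlinarith [two_mul_natCast_triangular k]

instance : Northcott triangular := northcott_of_natAbs_le_add 1 natAbs_le_triangular_add_one

instance : Northcott square :=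
  northcott_of_natAbs_le_add 0 fun k ↦ Nat.le_self_pow two_ne_zero k.natAbs

instance : Northcott pentagonal := northcott_of_natAbs_le_add 0 fun k ↦ by
  zify
  rcases abs_cases k with h | h <;> nlinarith [two_mul_natCast_pentagonal k]

instance : Northcott octagonal := northcott_of_natAbs_le_add 0 fun k ↦ by
  zify
  rcases abs_cases k with h | h <;> nlinarith [natCast_octagonal k]

variable (R : Type*) [CommRing R]

lemma theta_triangular_eq_two_mul :
    theta R triangular = 2 * theta R fun k : ℕ ↦ triangular k := by
  rw [theta_int_eq_add, two_mul]
  congr! 3 with k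
  grind [two_mul_natCast_triangular]

lemma theta_square_eq_one_add_two_mul :
    theta R square = 1 + 2 * theta R fun k : ℕ ↦ (k + 1) ^ 2 := by
  have : Northcott fun k : ℕ ↦ k ^ 2 := northcott_of_le_self fun k ↦ Nat.le_self_pow two_ne_zero k
  have hnat : (fun k : ℕ ↦ square k) = fun k ↦ k ^ 2 := by
    ext k
    simp [square]
  have hneg : (fun k : ℕ ↦ square (-1 - k)) = fun k ↦ (k + 1) ^ 2 := by
    ext k
    grind [natCast_square]
  rw [theta_int_eq_add, hnat, hneg, theta_nat_eq_X_pow_add, zero_pow two_ne_zero, pow_zero,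
    add_assoc, two_mul]

lemma theta_triangular_trisect :
    theta R triangular = 2 * (theta R pentagonal).expand 3 three_ne_zero +
      X * ((theta R triangular).expand 3 three_ne_zero).expand 3 three_ne_zero := by
  have h0 : (fun k : ℤ ↦ triangular (k * 3 + 0)) = (3 • pentagonal) ∘ Equiv.neg ℤ :=
    funext fun k ↦ show triangular (k * 3 + 0) = 3 * pentagonal (-k) by
      grind [two_mul_natCast_triangular, two_mul_natCast_pentagonal]
  have h1 : (fun k : ℤ ↦ triangular (k * 3 + 1)) = 3 • 3 • triangular + 1 :=
    funext fun k ↦ show triangular (k * 3 + 1) = 3 * (3 * triangular k) + 1 by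
      grind [two_mul_natCast_triangular]
  have h2 : (fun k : ℤ ↦ triangular (k * 3 + 2)) = (3 • pentagonal) ∘ Equiv.addRight 1 :=
    funext fun k ↦ show triangular (k * 3 + 2) = 3 * pentagonal (k + 1) by
      grind [two_mul_natCast_triangular, two_mul_natCast_pentagonal]
  have hsplit : theta R triangular = theta R (fun k ↦ triangular (k * 3 + 0)) +
      theta R (fun k ↦ triangular (k * 3 + 1)) + theta R fun k ↦ triangular (k * 3 + 2) :=
    (theta_int_eq_sum_mod 3 triangular).trans (Fin.sum_univ_three _)
  rw [h0, h1, h2] at hsplit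
  refine hsplit.trans ?_
  simp only [theta_comp_equiv, ← X_mul_theta, ← expand_theta]
  ring

lemma theta_square_trisect :
    theta R square = ((theta R square).expand 3 three_ne_zero).expand 3 three_ne_zero +
      2 * (X * (theta R octagonal).expand 3 three_ne_zero) := by
  have h0 : (fun k : ℤ ↦ square (k * 3 + 0)) = 3 • 3 • square :=
    funext fun k ↦ show square (k * 3 + 0) = 3 * (3 * square k) by grind [natCast_square]
  have h1 : (fun k : ℤ ↦ square (k * 3 + 1)) = (3 • octagonal + 1) ∘ Equiv.neg ℤ :=
    funext fun k ↦ show square (k * 3 + 1) = 3 * octagonal (-k) + 1 by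
      grind [natCast_square, natCast_octagonal]
  have h2 : (fun k : ℤ ↦ square (k * 3 + 2)) = (3 • octagonal + 1) ∘ Equiv.addRight 1 :=
    funext fun k ↦ show square (k * 3 + 2) = 3 * octagonal (k + 1) + 1 by
      grind [natCast_square, natCast_octagonal]
  have hsplit : theta R square = theta R (fun k ↦ square (k * 3 + 0)) +
      theta R (fun k ↦ square (k * 3 + 1)) + theta R fun k ↦ square (k * 3 + 2) :=
    (theta_int_eq_sum_mod 3 square).trans (Fin.sum_univ_three _)
  rw [h0, h1, h2] at hsplit
  refine hsplit.trans ?_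
  simp only [theta_comp_equiv, ← X_mul_theta, ← expand_theta]
  ring

lemma theta_triangular_sq :
    theta R triangular ^ 2 = 2 * (theta R square * (theta R triangular).expand 2 two_ne_zero) := by
  let e := prodWeight triangular triangular
  let f := prodWeight square (2 • triangular)
  have h0 : (fun p : ℤ × ℤ ↦ e ((2 - 1) * p.1 + p.2 + 0, p.1 - p.2)) = f ∘ Equiv.prodComm ℤ ℤ :=
    funext fun ⟨t, m⟩ ↦ show triangular ((2 - 1) * t + m + 0) + triangular (t - m) =
        square m + 2 * triangular t by
      grind [two_mul_natCast_triangular, natCast_square]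
  have h1 : (fun p : ℤ × ℤ ↦ e ((2 - 1) * p.1 + p.2 + 1, p.1 - p.2)) =
      f ∘ (Equiv.addRight 1).prodCongr (Equiv.refl ℤ) :=
    funext fun ⟨t, m⟩ ↦ show triangular ((2 - 1) * t + m + 1) + triangular (t - m) =
        square (t + 1) + 2 * triangular m by
      grind [two_mul_natCast_triangular, natCast_square]
  have hsplit : theta R e = theta R (fun p : ℤ × ℤ ↦ e ((2 - 1) * p.1 + p.2 + 0, p.1 - p.2)) +
      theta R fun p : ℤ × ℤ ↦ e ((2 - 1) * p.1 + p.2 + 1, p.1 - p.2) :=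
    (theta_int_prod_eq_sum_mod 2 e).trans (Fin.sum_univ_two _)
  rw [sq, theta_mul, hsplit, h0, h1]
  simp only [f, theta_comp_equiv, ← theta_mul, ← expand_theta]
  ring

lemma theta_triangular_mul_expand_two :
    theta R triangular * (theta R triangular).expand 2 two_ne_zero =
      (theta R square).expand 3 three_ne_zero * (theta R triangular).expand 3 three_ne_zero +
        2 * (theta R pentagonal * theta R octagonal) := by
  let e := prodWeight triangular (2 • triangular)
  let f := prodWeight pentagonal octagonal ∘ Equiv.prodComm ℤ ℤ
  have h0 : (fun p : ℤ × ℤ ↦ e ((3 - 1) * p.1 + p.2 + 0, p.1 - p.2)) =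
      f ∘ (Equiv.neg ℤ).prodCongr (Equiv.refl ℤ) :=
    funext fun ⟨t, y⟩ ↦ show triangular ((3 - 1) * t + y + 0) + 2 * triangular (t - y) =
        pentagonal y + octagonal (-t) by
      grind [two_mul_natCast_triangular, two_mul_natCast_pentagonal, natCast_octagonal]
  have h1 : (fun p : ℤ × ℤ ↦ e ((3 - 1) * p.1 + p.2 + 1, p.1 - p.2)) =
      f ∘ (Equiv.addRight 1).prodCongr (Equiv.neg ℤ) :=
    funext fun ⟨t, y⟩ ↦ show triangular ((3 - 1) * t + y + 1) + 2 * triangular (t - y) =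
        pentagonal (-y) + octagonal (t + 1) by
      grind [two_mul_natCast_triangular, two_mul_natCast_pentagonal, natCast_octagonal]
  have h2 : (fun p : ℤ × ℤ ↦ e ((3 - 1) * p.1 + p.2 + 2, p.1 - p.2)) =
      prodWeight (3 • square) (3 • triangular) ∘ (Equiv.addRight 1).prodCongr (Equiv.refl ℤ) :=
    funext fun ⟨t, y⟩ ↦ show triangular ((3 - 1) * t + y + 2) + 2 * triangular (t - y) =
        3 * square (t + 1) + 3 * triangular y by
      grind [two_mul_natCast_triangular, natCast_square]
  have hsplit : theta R e = theta R (fun p : ℤ × ℤ ↦ e ((3 - 1) * p.1 + p.2 + 0, p.1 - p.2)) +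
      theta R (fun p : ℤ × ℤ ↦ e ((3 - 1) * p.1 + p.2 + 1, p.1 - p.2)) +
        theta R fun p : ℤ × ℤ ↦ e ((3 - 1) * p.1 + p.2 + 2, p.1 - p.2) :=
    (theta_int_prod_eq_sum_mod 3 e).trans (Fin.sum_univ_three _)
  rw [expand_theta, theta_mul, hsplit, h0, h1, h2]
  simp only [f, theta_comp_equiv, ← theta_mul, ← expand_theta]
  ring

end Quadratic

section Gauss

/-- The `s`-th term of Shanks's finite form of Gauss's triangular number identity. -/
def shanksTerm {R : Type*} [CommRing R] (q : R) (n s : ℕ) : R :=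
  q ^ (s * (2 * n + 1)) * (∏ i ∈ Ico s n, (1 - q ^ (2 * i + 2))) *
    ∏ i ∈ range s, (1 - q ^ (2 * i + 1))

variable {R : Type*} [CommRing R]

lemma shanksTerm_zero (q : R) (n : ℕ) :
    shanksTerm q n 0 = ∏ i ∈ range n, (1 - q ^ (2 * i + 2)) := by
  simp [shanksTerm]

lemma shanksTerm_self (q : R) (n : ℕ) :
    shanksTerm q n n = q ^ (n * (2 * n + 1)) * ∏ i ∈ range n, (1 - q ^ (2 * i + 1)) := by
  simp [shanksTerm]

lemma shanksTerm_succ_left_sub (q : R) {n s : ℕ} (hs : s < n) :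
    shanksTerm q (n + 1) s - (1 - q ^ (2 * n + 1)) * shanksTerm q n s =
      shanksTerm q n (s + 1) * (1 - q ^ (2 * (s + 1))) - shanksTerm q n s * (1 - q ^ (2 * s)) := by
  simp only [shanksTerm, prod_Ico_succ_top hs.le, prod_range_succ, prod_eq_prod_Ico_succ_bot hs]
  ring

lemma shanksTerm_succ_self (q : R) (n : ℕ) :
    shanksTerm q (n + 1) n = q ^ (2 * n) * shanksTerm q n n * (1 - q ^ (2 * n + 2)) := by
  simp only [shanksTerm, Nat.Ico_succ_singleton, prod_singleton, Ico_self, prod_empty]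
  ring

lemma sum_shanksTerm_succ (q : R) (n : ℕ) :
    ∑ s ∈ range (n + 1), shanksTerm q (n + 1) s =
      (1 - q ^ (2 * n + 1)) * ∑ s ∈ range n, shanksTerm q n s +
        shanksTerm q n n * (1 - q ^ (2 * n)) +
          q ^ (2 * n) * shanksTerm q n n * (1 - q ^ (2 * n + 2)) := by
  have htelescope := sum_range_sub (fun s ↦ shanksTerm q n s * (1 - q ^ (2 * s))) n
  rw [← sum_congr rfl fun s hs ↦ shanksTerm_succ_left_sub q (mem_range.1 hs), sum_sub_distrib,
    ← mul_sum] at htelescope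
  rw [sum_range_succ, shanksTerm_succ_self]
  linear_combination htelescope

lemma sum_shanksTerm (q : R) (n : ℕ) :
    ∑ s ∈ range n, shanksTerm q n s =
      (∏ i ∈ range n, (1 - q ^ (2 * i + 1))) * ∑ s ∈ range (2 * n), q ^ triangular s := by
  induction n with
  | zero => simp
  | succ n ih =>
    have heven : triangular (2 * n : ℕ) = n * (2 * n + 1) := by
      grind [two_mul_natCast_triangular]
    have hodd : triangular (2 * n + 1 : ℕ) = n * (2 * n + 1) + (2 * n + 1) := by
      grind [two_mul_natCast_triangular]
    rw [sum_shanksTerm_succ, ih, shanksTerm_self, show 2 * (n + 1) = 2 * n + 1 + 1 from rfl,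
      sum_range_succ _ (2 * n + 1), sum_range_succ _ (2 * n), heven, hodd, prod_range_succ]
    ring

lemma X_pow_dvd_sum_shanksTerm_sub (n : ℕ) :
    (X : R⟦X⟧) ^ n ∣ ∑ s ∈ range n, shanksTerm X n s - ∏ i ∈ range n, (1 - X ^ (2 * i + 2)) := by
  cases n with
  | zero => simp
  | succ n =>
    rw [sum_range_succ', shanksTerm_zero, add_sub_cancel_right]
    refine dvd_sum fun s _ ↦ ?_
    rw [shanksTerm, mul_assoc]
    exact (pow_dvd_pow X (by nlinarith)).mul_right _

open Filter Topology WithPiTopology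

variable [TopologicalSpace R]

lemma tendsto_zero_of_X_pow_dvd {f : ℕ → R⟦X⟧} (h : ∀ n, X ^ n ∣ f n) :
    Tendsto f atTop (𝓝 0) := by
  refine (tendsto_iff_coeff_tendsto R _ _ _).2 fun d ↦ tendsto_atTop_of_eventually_const
    (i₀ := d + 1) fun n hn ↦ ?_
  rw [map_zero, X_pow_dvd_iff.1 (h n) d hn]

lemma multipliable_one_add_of_X_pow_dvd {f : ℕ → R⟦X⟧} (h : ∀ n, X ^ n ∣ f n) :
    Multipliable fun n ↦ 1 + f n :=
  multipliable_one_add_of_tendsto_order_atTop_nhds_top R <|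
    ENat.tendsto_nhds_top_iff_natCast_lt.2 fun d ↦ eventually_atTop.2 ⟨d + 1, fun n hn ↦
      (Nat.cast_lt.2 hn).trans_le (nat_le_order _ _ (X_pow_dvd_iff.1 (h n)))⟩

lemma continuous_expand {c : ℕ} (hc : c ≠ 0) : Continuous (expand c hc : R⟦X⟧ → R⟦X⟧) := by
  refine continuous_iff_continuousAt.2 fun f ↦ (tendsto_iff_coeff_tendsto R _ _ _).2 fun d ↦ ?_
  simp only [coeff_expand]
  split_ifs
  · exact (continuous_coeff R _).continuousAt
  · exact tendsto_const_nhds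

lemma multipliable_one_add_X_pow {e : ℕ → ℕ} (he : ∀ n, n ≤ e n) :
    Multipliable fun n ↦ (1 + X ^ e n : R⟦X⟧) :=
  multipliable_one_add_of_X_pow_dvd fun n ↦ pow_dvd_pow X (he n)

lemma multipliable_one_sub_X_pow {e : ℕ → ℕ} (he : ∀ n, n ≤ e n) :
    Multipliable fun n ↦ (1 - X ^ e n : R⟦X⟧) := by
  simp only [sub_eq_add_neg]
  exact multipliable_one_add_of_X_pow_dvd fun n ↦ (pow_dvd_pow X (he n)).neg_right

variable [T2Space R]

lemma tprod_ne_zero_of_constantCoeff_eq_one [Nontrivial R] {f : ℕ → R⟦X⟧} (hf : Multipliable f)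
    (h : ∀ n, constantCoeff (f n) = 1) : ∏' n, f n ≠ 0 := by
  intro hzero
  have hcoeff := hf.map_tprod _ (continuous_constantCoeff R)
  simp [hzero, h] at hcoeff

variable [IsTopologicalRing R]

lemma tprod_one_sub_X_pow_mul_tprod_one_add_X_pow {e : ℕ → ℕ} (he : ∀ n, n ≤ e n) :
    (∏' n, (1 - X ^ e n)) * ∏' n, (1 + X ^ e n) =
      (∏' n, (1 - X ^ e n) : R⟦X⟧).expand 2 two_ne_zero := by
  have hsub : Multipliable fun n ↦ (1 - X ^ e n : R⟦X⟧) := multipliable_one_sub_X_pow he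
  rw [hsub.map_tprod _ (continuous_expand two_ne_zero),
    ← hsub.tprod_mul (multipliable_one_add_X_pow he)]
  congr! 2 with n
  simp only [map_sub, map_one, map_pow, expand_X]
  ring

lemma tprod_mul_theta_triangular_nat :
    (∏' i : ℕ, (1 - X ^ (2 * i + 1))) * theta R (fun k : ℕ ↦ triangular k) =
      ∏' i : ℕ, (1 - X ^ (2 * i + 2)) := by
  have : Northcott fun k : ℕ ↦ triangular k :=
    northcott_comp_of_injective triangular Nat.cast_injective
  have hodd := (multipliable_one_sub_X_pow (R := R) (e := fun i ↦ 2 * i + 1)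
    fun _ ↦ by lia).hasProd.tendsto_prod_nat
  have heven := (multipliable_one_sub_X_pow (R := R) (e := fun i ↦ 2 * i + 2)
    fun _ ↦ by lia).hasProd.tendsto_prod_nat
  have hsum := (hasSum_theta (R := R) fun k : ℕ ↦ triangular k).tendsto_sum_nat.comp
    (tendsto_id.const_mul_atTop' two_pos)
  refine tendsto_nhds_unique (hodd.mul hsum) ?_
  have hlim := (tendsto_zero_of_X_pow_dvd X_pow_dvd_sum_shanksTerm_sub).add heven
  simpa only [sum_shanksTerm, sub_add_cancel, zero_add, comp_apply, id] using hlim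

end Gauss

section PedSeries

/-- The signed generating series `∑ n, (-1) ^ n * ped n * X ^ n`. -/
noncomputable def signedPed : ℤ⟦X⟧ := mk fun n ↦ (-1) ^ n * (ped n : ℤ)

/-- The weight of `c` copies of the part `i` in `signedPed`. -/
def pedWeight (i c : ℕ) : ℤ := if Even i ∧ 1 < c then 0 else (-1) ^ (c * i)

lemma prod_pedWeight {n : ℕ} (p : n.Partition) :
    p.parts.toFinsupp.prod pedWeight =
      if ∀ i ∈ p.parts, Even i → p.parts.count i ≤ 1 then (-1) ^ n else 0 := by
  simp only [Finsupp.prod, Multiset.toFinsupp_support, Multiset.toFinsupp_apply]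
  split_ifs with h
  · have hweight : ∀ i ∈ p.parts.toFinset,
        pedWeight i (p.parts.count i) = (-1) ^ (p.parts.count i * i) := fun i hi ↦ if_neg fun hc ↦
      hc.2.not_ge (h i (Multiset.mem_toFinset.1 hi) hc.1)
    have hparts : ∑ i ∈ p.parts.toFinset, p.parts.count i * i = n := by
      simpa [sum_multiset_count] using p.parts_sum
    rw [prod_congr rfl hweight, prod_pow_eq_pow_sum, hparts]
  · push Not at h
    obtain ⟨i, hi, heven, hcount⟩ := h
    exact prod_eq_zero (Multiset.mem_toFinset.2 hi) (if_pos ⟨heven, hcount⟩)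

lemma signedPed_eq_genFun : signedPed = Nat.Partition.genFun pedWeight := by
  ext n
  simp only [signedPed, coeff_mk, Nat.Partition.coeff_genFun, prod_pedWeight, ped,
    Fintype.card_subtype, card_filter, Nat.cast_sum, mul_sum]
  exact sum_congr rfl fun p _ ↦ by split_ifs <;> simp

open WithPiTopology

/-- The factor contributed to `signedPed` by the part `i`. -/
noncomputable def pedFactor (i : ℕ) : ℤ⟦X⟧ :=
  1 + ∑' j, pedWeight i (j + 1) • X ^ (i * (j + 1))

lemma pedFactor_odd_mul (i : ℕ) : pedFactor (2 * i + 1) * (1 + X ^ (2 * i + 1)) = 1 := by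
  have hconst : constantCoeff (-X ^ (2 * i + 1) : ℤ⟦X⟧) = 0 := by simp
  have hfactor : pedFactor (2 * i + 1) = ∑' j, (-X ^ (2 * i + 1)) ^ j := by
    rw [(summable_pow_of_constantCoeff_eq_zero hconst).tsum_eq_zero_add, pow_zero, pedFactor]
    congr! 3 with j
    rw [pedWeight, if_neg fun h ↦ Nat.not_even_two_mul_add_one i h.1, neg_pow (X ^ _), ← pow_mul,
      mul_comm (j + 1), pow_mul, Odd.neg_one_pow ⟨i, rfl⟩, zsmul_eq_mul]
    simp
  rw [hfactor, ← sub_neg_eq_add]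
  exact tsum_pow_mul_one_sub_of_constantCoeff_eq_zero hconst

lemma pedFactor_even (i : ℕ) : pedFactor (2 * i + 2) = 1 + X ^ (2 * i + 2) := by
  have heven : Even (2 * i + 2) := ⟨i + 1, by ring⟩
  rw [pedFactor, tsum_eq_single 0 fun j hj ↦ by
    rw [pedWeight, if_pos ⟨heven, by lia⟩, zero_smul]]
  simp [pedWeight, heven]

lemma prod_pedFactor_mul (n : ℕ) :
    (∏ i ∈ range (2 * n), pedFactor (i + 1)) * ∏ i ∈ range n, (1 + X ^ (2 * i + 1)) =
      ∏ i ∈ range n, (1 + X ^ (2 * i + 2)) := by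
  induction n with
  | zero => simp
  | succ n ih =>
    rw [show 2 * (n + 1) = 2 * n + 1 + 1 from rfl]
    simp only [prod_range_succ]
    rw [pedFactor_even, ← ih]
    linear_combination (∏ i ∈ range (2 * n), pedFactor (i + 1)) *
      (∏ i ∈ range n, (1 + X ^ (2 * i + 1))) * (1 + X ^ (2 * n + 2)) * pedFactor_odd_mul n

lemma signedPed_mul_tprod :
    signedPed * ∏' i : ℕ, (1 + X ^ (2 * i + 1)) = ∏' i : ℕ, (1 + X ^ (2 * i + 2)) := by
  have hodd := (multipliable_one_add_X_pow (R := ℤ) (e := fun i ↦ 2 * i + 1)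
    fun _ ↦ by lia).hasProd.tendsto_prod_nat
  have heven := (multipliable_one_add_X_pow (R := ℤ) (e := fun i ↦ 2 * i + 2)
    fun _ ↦ by lia).hasProd.tendsto_prod_nat
  have hped := (Nat.Partition.hasProd_genFun pedWeight).tendsto_prod_nat.comp
    (Filter.tendsto_id.const_mul_atTop' two_pos)
  rw [← signedPed_eq_genFun] at hped
  exact tendsto_nhds_unique (hped.mul hodd) (heven.congr fun n ↦ (prod_pedFactor_mul n).symm)

lemma signedPed_mul_theta_triangular :
    signedPed * theta ℤ triangular = (theta ℤ triangular).expand 2 two_ne_zero := by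
  set ψ := theta ℤ fun k : ℕ ↦ triangular k
  have hψ : (∏' i : ℕ, (1 - X ^ (2 * i + 1))) * ψ = ∏' i : ℕ, (1 - X ^ (2 * i + 2)) :=
    tprod_mul_theta_triangular_nat
  have hψ₂ := congrArg (expand 2 two_ne_zero) hψ
  rw [map_mul, ← tprod_one_sub_X_pow_mul_tprod_one_add_X_pow fun _ ↦ by lia,
    ← tprod_one_sub_X_pow_mul_tprod_one_add_X_pow fun _ ↦ by lia, ← hψ,
    ← signedPed_mul_tprod] at hψ₂
  have hne : ∏' i : ℕ, (1 - X ^ (2 * i + 1) : ℤ⟦X⟧) ≠ 0 :=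
    tprod_ne_zero_of_constantCoeff_eq_one (multipliable_one_sub_X_pow fun _ ↦ by lia) (by simp)
  have hne' : ∏' i : ℕ, (1 + X ^ (2 * i + 1) : ℤ⟦X⟧) ≠ 0 :=
    tprod_ne_zero_of_constantCoeff_eq_one (multipliable_one_add_X_pow fun _ ↦ by lia) (by simp)
  rw [theta_triangular_eq_two_mul, map_mul, map_ofNat]
  refine mul_left_cancel₀ (mul_ne_zero hne hne') ?_
  linear_combination -2 * hψ₂

lemma two_mul_signedPed_mul_theta_square :
    2 * signedPed * theta ℤ square = theta ℤ triangular := by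
  refine mul_left_cancel₀ (theta_ne_zero triangular) ?_
  rw [← sq, theta_triangular_sq, ← signedPed_mul_theta_triangular]
  ring

end PedSeries

section ModEight

lemma expand_eq_pow (p : ℕ) [Fact p.Prime] (f : (ZMod p)⟦X⟧) :
    f.expand p (NeZero.ne p) = f ^ p := by
  have h := MvPowerSeries.map_frobenius_expand (σ := Unit) (R := ZMod p) p (NeZero.ne p) (f := f)
  rwa [ZMod.frobenius_zmod, MvPowerSeries.map_id] at h

lemma natCast_dvd_of_map_eq_zero {n : ℕ} {f : ℤ⟦X⟧} (h : f.map (Int.castRingHom (ZMod n)) = 0) :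
    (n : ℤ⟦X⟧) ∣ f := by
  have hcoeff (k : ℕ) : (n : ℤ) ∣ coeff k f :=
    (ZMod.intCast_zmod_eq_zero_iff_dvd _ _).1 (by simpa using congrArg (coeff k) h)
  choose g hg using hcoeff
  refine ⟨mk g, ?_⟩
  ext k
  rw [← map_natCast (C (R := ℤ)) n, coeff_C_mul, coeff_mk]
  exact hg k

lemma natCast_dvd_pow_sub_expand (p : ℕ) [Fact p.Prime] (f : ℤ⟦X⟧) :
    (p : ℤ⟦X⟧) ∣ f ^ p - f.expand p (NeZero.ne p) :=
  natCast_dvd_of_map_eq_zero <| by rw [map_sub, map_pow, map_expand, expand_eq_pow, sub_self]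

lemma eight_dvd_one_add_two_mul_mul_sub_one (f : ℤ⟦X⟧) :
    8 ∣ (1 + 2 * f) * (2 * (1 + 2 * f).expand 2 two_ne_zero - (1 + 2 * f)) - 1 := by
  obtain ⟨g, hg⟩ := natCast_dvd_pow_sub_expand 2 f
  refine ⟨f * f.expand 2 two_ne_zero - g, ?_⟩
  rw [map_add, map_mul, map_one, map_ofNat]
  push_cast at hg
  linear_combination -4 * hg

lemma sixteen_dvd_theta_triangular_mul_sub_two_mul_signedPed :
    16 ∣ theta ℤ triangular *
      (2 * (theta ℤ square).expand 2 two_ne_zero - theta ℤ square) - 2 * signedPed := by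
  obtain ⟨g, hg⟩ := eight_dvd_one_add_two_mul_mul_sub_one (theta ℤ fun k : ℕ ↦ (k + 1) ^ 2)
  rw [← theta_square_eq_one_add_two_mul] at hg
  refine ⟨signedPed * g, ?_⟩
  rw [← two_mul_signedPed_mul_theta_square]
  linear_combination 2 * signedPed * hg

lemma eight_dvd_ped {N : ℕ} (h8 : ∀ x y : ℤ, x ^ 2 + 8 * y ^ 2 ≠ 8 * N + 1)
    (h16 : ∀ x y : ℤ, x ^ 2 + 16 * y ^ 2 ≠ 8 * N + 1) : 8 ∣ ped N := by
  have hsquare : coeff N (theta ℤ triangular * theta ℤ square) = 0 := by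
    rw [theta_mul]
    refine coeff_theta_eq_zero fun ⟨k, y⟩ hN ↦ h8 (2 * k + 1) y ?_
    rw [← hN, prodWeight]
    grind [two_mul_natCast_triangular, natCast_square]
  have hexpand : coeff N (theta ℤ triangular * (theta ℤ square).expand 2 two_ne_zero) = 0 := by
    rw [expand_theta, theta_mul]
    refine coeff_theta_eq_zero fun ⟨k, y⟩ hN ↦ h16 (2 * k + 1) y ?_
    rw [← hN, prodWeight, Pi.smul_apply]
    grind [two_mul_natCast_triangular, natCast_square]
  obtain ⟨g, hg⟩ := sixteen_dvd_theta_triangular_mul_sub_two_mul_signedPed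
  have hcoeff := congrArg (coeff N) hg
  rw [← map_ofNat (C (R := ℤ)) 16, ← map_ofNat (C (R := ℤ)) 2, mul_sub, mul_left_comm, map_sub,
    map_sub, coeff_C_mul, coeff_C_mul, coeff_C_mul, hsquare, hexpand, signedPed, coeff_mk] at hcoeff
  have hdvd : (8 : ℤ) ∣ (-1) ^ N * ped N := ⟨-coeff N g, by linarith⟩
  rw [(isUnit_one.neg.pow N).dvd_mul_left] at hdvd
  exact_mod_cast hdvd

lemma sq_sub_mul_sq_ne {p : ℕ} [Fact p.Prime] {a m : ℤ} (ha : legendreSym p a = -1)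
    (hm : (p : ℤ) ∣ m) (hm' : ¬ (p : ℤ) ^ 2 ∣ m) (x y : ℤ) : x ^ 2 - a * y ^ 2 ≠ m := by
  rintro rfl
  obtain ⟨hx, hy⟩ := legendreSym.prime_dvd_of_eq_neg_one ha hm
  exact hm' ((pow_dvd_pow_of_dvd hx 2).sub ((pow_dvd_pow_of_dvd hy 2).mul_left a))

instance fact_prime_five : Fact (Nat.Prime 5) := ⟨Nat.prime_five⟩

lemma sq_add_eight_mul_sq_ne (n : ℕ) (x y : ℤ) :
    x ^ 2 + 8 * y ^ 2 ≠ 8 * (225 * n + 43 : ℕ) + 1 := by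
  have h := sq_sub_mul_sq_ne (p := 5) (a := -8) (m := 8 * (225 * n + 43 : ℕ) + 1) (by decide)
    (by lia) (by lia) x y
  rwa [neg_mul, sub_neg_eq_add] at h

lemma sq_add_sixteen_mul_sq_ne (n : ℕ) (x y : ℤ) :
    x ^ 2 + 16 * y ^ 2 ≠ 8 * (225 * n + 43 : ℕ) + 1 := by
  have h := sq_sub_mul_sq_ne (p := 3) (a := -16) (m := 8 * (225 * n + 43 : ℕ) + 1) (by decide)
    (by lia) (by lia) x y
  rwa [neg_mul, sub_neg_eq_add] at h

end ModEight

section ModThree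

/-- The coefficients of `f` along the arithmetic progression `p * n + r`. -/
noncomputable def decimate {R : Type*} [CommRing R] (p r : ℕ) (f : R⟦X⟧) : R⟦X⟧ :=
  mk fun n ↦ coeff (p * n + r) f

variable {R : Type*} [CommRing R]

@[simp] lemma coeff_decimate (p r n : ℕ) (f : R⟦X⟧) :
    coeff n (decimate p r f) = coeff (p * n + r) f :=
  coeff_mk _ _

lemma decimate_add (p r : ℕ) (f g : R⟦X⟧) :
    decimate p r (f + g) = decimate p r f + decimate p r g := by
  ext n
  simp

lemma decimate_mul_expand {p r : ℕ} (hr : r < p) (f g : R⟦X⟧) :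
    decimate p r (f * g.expand p (Nat.ne_zero_of_lt hr)) = decimate p r f * g := by
  ext n
  have hp := Nat.ne_zero_of_lt hr
  simp only [coeff_decimate, coeff_mul]
  refine (sum_of_injOn (fun x ↦ (p * x.1 + r, p * x.2)) ?_ ?_ ?_ ?_).symm
  · rintro ⟨i, j⟩ - ⟨i', j'⟩ - h
    simpa [hp] using h
  · rintro ⟨i, j⟩ h
    obtain rfl : i + j = n := by simpa using h
    rw [mem_coe, HasAntidiagonal.mem_antidiagonal]
    ring
  · rintro ⟨i, j⟩ h hnot
    have hij : i + j = p * n + r := by simpa using h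
    rw [coeff_expand_of_not_dvd, mul_zero]
    rintro ⟨j, rfl⟩
    have hjn : j ≤ n := Nat.lt_succ_iff.1 (Nat.lt_of_mul_lt_mul_left (a := p) (by lia))
    obtain ⟨k, rfl⟩ := Nat.exists_eq_add_of_le' hjn
    exact hnot ⟨(k, j), by simp, Prod.ext (by lia) rfl⟩
  · rintro ⟨i, j⟩ -
    simp

lemma decimate_X_pow {p r s : ℕ} (hs : s < p) :
    decimate p r (X ^ s : R⟦X⟧) = if s = r then 1 else 0 := by
  ext n
  rw [coeff_decimate, coeff_X_pow]
  rcases n.eq_zero_or_pos with rfl | hn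
  · split_ifs <;> simp_all
  · have hne : p * n + r ≠ s := by nlinarith
    rw [if_neg hne]
    split_ifs
    · rw [coeff_one, if_neg hn.ne']
    · rw [map_zero]

lemma decimate_X_pow_mul_expand {p r s : ℕ} (hr : r < p) (hs : s < p) (f : R⟦X⟧) :
    decimate p r (X ^ s * f.expand p (Nat.ne_zero_of_lt hr)) = if s = r then f else 0 := by
  rw [decimate_mul_expand hr, decimate_X_pow hs, ite_mul, one_mul, zero_mul]

lemma decimate_one_theta_triangular_mul_theta_square_sq :
    decimate 3 1 (theta R triangular * theta R square ^ 2) =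
      (theta R square).expand 3 three_ne_zero *
        (8 * (theta R pentagonal * theta R octagonal) +
          (theta R square).expand 3 three_ne_zero *
            (theta R triangular).expand 3 three_ne_zero) := by
  set A := theta R pentagonal
  set O := theta R octagonal
  set Q := (theta R square).expand 3 three_ne_zero
  set T := (theta R triangular).expand 3 three_ne_zero
  have hsplit : theta R triangular * theta R square ^ 2 =
      X ^ 0 * (2 * A * Q ^ 2 + 4 * X * T * O ^ 2).expand 3 three_ne_zero +
      X ^ 1 * (Q * (8 * (A * O) + Q * T)).expand 3 three_ne_zero +
      X ^ 2 * (8 * A * O ^ 2 + 4 * T * Q * O).expand 3 three_ne_zero := by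
    rw [theta_triangular_trisect, theta_square_trisect]
    simp only [map_add, map_mul, map_pow, map_ofNat, expand_X]
    ring
  rw [hsplit, decimate_add, decimate_add, decimate_X_pow_mul_expand (by simp) (by simp),
    decimate_X_pow_mul_expand (by simp) (by simp), decimate_X_pow_mul_expand (by simp) (by simp)]
  simp

lemma decimate_two_theta_square : decimate 3 2 (theta R square) = 0 := by
  ext n
  rw [coeff_decimate, map_zero]
  refine coeff_theta_eq_zero fun k hk ↦ ?_
  have hsq := natCast_square k
  have hmod := congrArg (fun m : ℤ ↦ (m : ZMod 3)) (hk ▸ hsq)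
  revert hmod
  push_cast
  generalize (k : ZMod 3) = x
  rw [show (3 : ZMod 3) = 0 from rfl, zero_mul]
  revert x
  decide

lemma theta_square_ne_zero [Nontrivial R] : theta R square ≠ 0 := by
  have hconst : coeff 0 (theta R fun k : ℕ ↦ (k + 1) ^ 2) = 0 :=
    coeff_theta_eq_zero fun k ↦ by positivity
  intro h
  have h := congrArg (coeff 0) (h ▸ theta_square_eq_one_add_two_mul R)
  rw [two_mul, map_add, map_add, hconst] at h
  simp at h

lemma decimate_one_signedPed :
    decimate 3 1 (signedPed.map (Int.castRingHom (ZMod 3))) =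
      theta (ZMod 3) square * (theta (ZMod 3) triangular).expand 3 three_ne_zero := by
  set G := signedPed.map (Int.castRingHom (ZMod 3))
  set Q := theta (ZMod 3) square
  set T := theta (ZMod 3) triangular
  set A := theta (ZMod 3) pentagonal
  set O := theta (ZMod 3) octagonal
  have hthree : (3 : (ZMod 3)⟦X⟧) = 0 := by
    rw [← map_ofNat (C (R := ZMod 3)) 3, show (OfNat.ofNat 3 : ZMod 3) = 0 from rfl, map_zero]
  have hG : (G + G) * Q = T := by
    simpa only [two_mul, map_mul, map_add, map_theta] using
      congrArg (map (Int.castRingHom (ZMod 3))) two_mul_signedPed_mul_theta_square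
  have hcube (f : (ZMod 3)⟦X⟧) : f.expand 3 three_ne_zero = f ^ 3 := expand_eq_pow 3 f
  have hQ : 2 * decimate 3 1 G * Q = Q ^ 2 * (T * T.expand 2 two_ne_zero) * Q := by
    have h : decimate 3 1 (T * Q ^ 2) = Q.expand 3 three_ne_zero * (8 * (A * O) +
        Q.expand 3 three_ne_zero * T.expand 3 three_ne_zero) :=
      decimate_one_theta_triangular_mul_theta_square_sq
    have htwo : T * T.expand 2 two_ne_zero =
        Q.expand 3 three_ne_zero * T.expand 3 three_ne_zero + 2 * (A * O) :=
      theta_triangular_mul_expand_two (ZMod 3)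
    rw [show T * Q ^ 2 = (G + G) * Q.expand 3 three_ne_zero by rw [hcube, ← hG]; ring,
      decimate_mul_expand (by simp), decimate_add, hcube Q] at h
    rw [hcube Q] at htwo
    linear_combination h - Q ^ 3 * htwo + 2 * A * O * Q ^ 3 * hthree
  have hcancel := mul_right_cancel₀ theta_square_ne_zero hQ
  rw [hcube]
  have hsq : T ^ 2 = 2 * (Q * T.expand 2 two_ne_zero) := theta_triangular_sq (ZMod 3)
  linear_combination 2 * hcancel - Q * T * hsq - decimate 3 1 G * hthree

lemma three_dvd_ped (n : ℕ) : 3 ∣ ped (9 * n + 7) := by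
  have hzero : decimate 3 2 (decimate 3 1 (signedPed.map (Int.castRingHom (ZMod 3)))) = 0 := by
    rw [decimate_one_signedPed, decimate_mul_expand (by simp), decimate_two_theta_square, zero_mul]
  have hcoeff : (((-1) ^ (9 * n + 7) * ped (9 * n + 7) : ℤ) : ZMod 3) = 0 := by
    have h := congrArg (coeff n) hzero
    rw [coeff_decimate, coeff_decimate, show 3 * (3 * n + 2) + 1 = 9 * n + 7 by ring] at h
    simpa only [signedPed, coeff_map, coeff_mk, map_zero, eq_intCast] using h
  rw [ZMod.intCast_zmod_eq_zero_iff_dvd, (isUnit_one.neg.pow _).dvd_mul_left] at hcoeff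
  exact_mod_cast hcoeff

end ModThree

theorem ped_225n_add_43 (n : ℕ) : ped (225 * n + 43) ≡ 0 [MOD 24] := by
  have h3 : 3 ∣ ped (225 * n + 43) := by
    simpa only [show 9 * (25 * n + 4) + 7 = 225 * n + 43 by ring] using three_dvd_ped (25 * n + 4)
  have h8 : 8 ∣ ped (225 * n + 43) :=
    eight_dvd_ped (sq_add_eight_mul_sq_ne n) (sq_add_sixteen_mul_sq_ne n)
  have hcoprime : Nat.Coprime 3 8 := by norm_num
  exact Nat.modEq_zero_iff_dvd.2 (hcoprime.mul_dvd_of_dvd_of_dvd h3 h8)
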